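/- Let d, k ≥ 1 be integers and ε ≥ 0. Let ν be a Borel probability measure on U(d) and μ the normalized Haar probability measure on U(d). For a probability measure λ on U(d) and a positive integer s, define the moment superoperator Φ_λ^{(s)}(X) = ∫ U^{⊗s} X (Uᴴ)^{⊗s} dλ(U) acting on matrices X indexed by (Fin s → Fin d). Assume ν is an ε-approximate unitary 2k-design in relative error, i.e. for every positive integer D and every positive semidefinite matrix M indexed by (Fin 2k → Fin d) × Fin D, both (Φ_ν^{(2k)} ⊗ id_D)(M) − (1−ε)·(Φ_μ^{(2k)} ⊗ id_D)(M) and (1+ε)·(Φ_μ^{(2k)} ⊗ id_D)(M) − (Φ_ν^{(2k)} ⊗ id_D)(M) are positive semidefinite. Then for all positive semidefinite d×d matrices A and B and every Kraus channel Γ on d×d matrices, | ∫ (tr(A·UᴴΓ(U B Uᴴ)U))^k dν(U) − ∫ (tr(A·UᴴΓ(U B Uᴴ)U))^k dμ(U) | ≤ 2ε·(tr A)^k·(tr B)^k. (Twirling-error lemma for relative-error approximate designs.) -/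

import Mathlib

open MeasureTheory Matrix
open scoped Kronecker ComplexOrder

attribute [local instance] Matrix.normedAddCommGroup Matrix.normedSpace

/-- The `s`-fold Kronecker (tensor) power of a square matrix, indexed by `Fin s → ι`. -/
noncomputable def tpow {ι : Type*} (M : Matrix ι ι ℂ) (s : ℕ) :
    Matrix (Fin s → ι) (Fin s → ι) ℂ :=
  fun f g => ∏ i, M (f i) (g i)

noncomputable instance {n : Type*} [Fintype n] [DecidableEq n] :
    MeasurableSpace (Matrix.unitaryGroup n ℂ) := borel _

instance {n : Type*} [Fintype n] [DecidableEq n] :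
    BorelSpace (Matrix.unitaryGroup n ℂ) := ⟨rfl⟩

/-- The moment superoperator `Φ_λ^{(s)} ⊗ id_D` of a measure `λ` on `U(d)`, acting on
matrices indexed by `(Fin s → Fin d) × Fin D`. -/
noncomputable def momentOp (d s D : ℕ) (lam : Measure (Matrix.unitaryGroup (Fin d) ℂ))
    (M : Matrix ((Fin s → Fin d) × Fin D) ((Fin s → Fin d) × Fin D) ℂ) :
    Matrix ((Fin s → Fin d) × Fin D) ((Fin s → Fin d) × Fin D) ℂ :=
  ∫ U, (tpow (U : Matrix (Fin d) (Fin d) ℂ) s ⊗ₖ (1 : Matrix (Fin D) (Fin D) ℂ)) * M *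
       (tpow (U : Matrix (Fin d) (Fin d) ℂ) s ⊗ₖ (1 : Matrix (Fin D) (Fin D) ℂ))ᴴ ∂lam

/-!
The swap operator `F` linearizes products: `tr (A * C) = tr (F * (A ⊗ C))`. Since `tr` is cyclic and
`Γ†` is adjoint to `Γ`, the `k`-th power of `tr (A * Uᴴ * Γ (U * B * Uᴴ) * U)` is the expectation of
the observable `T = (id ⊗ Γ†)(F)^{⊗k}` in the state `A^{⊗k} ⊗ B^{⊗k}` conjugated by `U^{⊗2k}`.
Averaging over `U` therefore replaces this state by its image under the `2k`-th moment operator.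

The spectrum of `F` is contained in `{1, -1}` and `Γ†` is unital and completely positive, so
`-1 ≤ T ≤ 1`. The design hypothesis bounds the difference `X` of the two averages by
`-ε • P ≤ X ≤ ε • P`, where `P` is the average over `μ`. These two bounds together
give `|tr (T * X)| ≤ ε * tr P`, and conjugation by unitaries preserves the trace.
-/

section Positivity

variable {𝕜 n : Type*} [RCLike 𝕜] [Fintype n]

open scoped MatrixOrder in
lemma exists_eq_conjTranspose_mul_self {P : Matrix n n 𝕜} (hP : P.PosSemidef) :
    ∃ R : Matrix n n 𝕜, P = Rᴴ * R := by
  classical exact CStarAlgebra.nonneg_iff_eq_star_mul_self.mp hP.nonneg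

lemma trace_mul_nonneg_of_posSemidef {P Q : Matrix n n 𝕜} (hP : P.PosSemidef)
    (hQ : Q.PosSemidef) : 0 ≤ (P * Q).trace := by
  obtain ⟨R, rfl⟩ := exists_eq_conjTranspose_mul_self hP
  have h := (hQ.mul_mul_conjTranspose_same R).trace_nonneg
  rwa [trace_mul_comm, ← Matrix.mul_assoc] at h

lemma norm_le_re_of_add_nonneg_of_sub_nonneg {t y : 𝕜} (hadd : 0 ≤ y + t) (hsub : 0 ≤ y - t) :
    ‖t‖ ≤ RCLike.re y := by
  have norm_eq_re {z : 𝕜} (hz : 0 ≤ z) : ‖z‖ = RCLike.re z := by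
    simpa using congrArg RCLike.re (RCLike.norm_of_nonneg' hz)
  have hdouble : ‖(2 : 𝕜) * t‖ ≤ ‖y + t‖ + ‖y - t‖ := by
    rw [show (2 : 𝕜) * t = (y + t) - (y - t) by ring]
    exact norm_sub_le _ _
  rw [norm_mul, RCLike.norm_two, norm_eq_re hadd, norm_eq_re hsub, map_add, map_sub] at hdouble
  linarith

lemma norm_trace_mul_le [DecidableEq n] {T X Y : Matrix n n 𝕜}
    (hT_add : (1 + T).PosSemidef) (hT_sub : (1 - T).PosSemidef)
    (hX_add : (Y + X).PosSemidef) (hX_sub : (Y - X).PosSemidef) :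
    ‖(T * X).trace‖ ≤ RCLike.re Y.trace := by
  have half_nonneg : (0 : 𝕜) ≤ 2⁻¹ := by positivity
  have hadd : Y.trace + (T * X).trace =
      2⁻¹ * (((1 + T) * (Y + X)).trace + ((1 - T) * (Y - X)).trace) := by
    simp only [add_mul, sub_mul, mul_add, mul_sub, one_mul, trace_add, trace_sub]
    ring
  have hsub : Y.trace - (T * X).trace =
      2⁻¹ * (((1 + T) * (Y - X)).trace + ((1 - T) * (Y + X)).trace) := by
    simp only [add_mul, sub_mul, mul_add, mul_sub, one_mul, trace_add, trace_sub]
    ring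
  apply norm_le_re_of_add_nonneg_of_sub_nonneg
  · rw [hadd]
    exact mul_nonneg half_nonneg (add_nonneg (trace_mul_nonneg_of_posSemidef hT_add hX_add)
      (trace_mul_nonneg_of_posSemidef hT_sub hX_sub))
  · rw [hsub]
    exact mul_nonneg half_nonneg (add_nonneg (trace_mul_nonneg_of_posSemidef hT_add hX_sub)
      (trace_mul_nonneg_of_posSemidef hT_sub hX_add))

lemma posSemidef_one_add_of_mul_self_eq_one [DecidableEq n] {F : Matrix n n 𝕜}
    (hF : F.IsHermitian) (hFF : F * F = 1) : (1 + F).PosSemidef := by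
  have half_nonneg : (0 : 𝕜) ≤ 2⁻¹ := by positivity
  have hsq : (1 + F)ᴴ * (1 + F) = (2 : 𝕜) • (1 + F) := by
    simp only [conjTranspose_add, conjTranspose_one, hF.eq, mul_add, add_mul, one_mul, mul_one,
      hFF, two_smul]
    abel
  have h := (posSemidef_conjTranspose_mul_self (1 + F)).smul half_nonneg
  rwa [hsq, inv_smul_smul₀ two_ne_zero] at h

end Positivity

section PiKronecker

variable {σ l m n R : Type*} [Fintype σ] [CommSemiring R]

/-- The Kronecker product `⨂ i, C i` of a finite family of matrices, with rows and columns indexed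
by functions on the index set of the family. -/
def piKronecker (C : σ → Matrix m n R) : Matrix (σ → m) (σ → n) R :=
  of fun f g => ∏ i, C i (f i) (g i)

lemma tpow_eq_piKronecker {ι : Type*} (M : Matrix ι ι ℂ) (s : ℕ) :
    tpow M s = piKronecker fun _ : Fin s => M := rfl

lemma piKronecker_mul_piKronecker [DecidableEq σ] [Fintype m] (C : σ → Matrix l m R)
    (D : σ → Matrix m n R) :
    piKronecker C * piKronecker D = piKronecker fun i => C i * D i := by
  ext f g
  simp only [piKronecker, mul_apply, of_apply, ← Finset.prod_mul_distrib, Fintype.prod_sum]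

lemma conjTranspose_piKronecker [StarRing R] (C : σ → Matrix m n R) :
    (piKronecker C)ᴴ = piKronecker fun i => (C i)ᴴ := by
  ext f g
  simp [piKronecker]

lemma piKronecker_one [DecidableEq n] :
    piKronecker (fun _ : σ => (1 : Matrix n n R)) = 1 := by
  ext f g
  simp only [piKronecker, of_apply, one_apply, Finset.prod_ite_zero, Finset.prod_const_one,
    funext_iff, Finset.mem_univ, true_implies]

lemma piKronecker_sum {κ : Type*} [DecidableEq σ] [Fintype κ] (C : σ → κ → Matrix m n R) :
    piKronecker (fun i => ∑ a, C i a) = ∑ α : σ → κ, piKronecker fun i => C i (α i) := by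
  ext f g
  simp only [piKronecker, of_apply, Matrix.sum_apply, Fintype.prod_sum]

lemma sum_conjTranspose_mul_self_piKronecker {κ : Type*} [StarRing R] [DecidableEq σ]
    [Fintype κ] [Fintype m] [DecidableEq n] {K : σ → κ → Matrix m n R}
    (hK : ∀ i, ∑ a, (K i a)ᴴ * K i a = 1) :
    ∑ α : σ → κ, (piKronecker fun i => K i (α i))ᴴ * piKronecker (fun i => K i (α i)) = 1 := by
  simp only [conjTranspose_piKronecker, piKronecker_mul_piKronecker]
  rw [← piKronecker_sum fun i a => (K i a)ᴴ * K i a, funext hK, piKronecker_one]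

lemma trace_piKronecker [DecidableEq σ] [Fintype n] (C : σ → Matrix n n R) :
    (piKronecker C).trace = ∏ i, (C i).trace := by
  simp only [piKronecker, trace, diag, of_apply, Fintype.prod_sum]

lemma posSemidef_piKronecker {𝕜 : Type*} [RCLike 𝕜] [Finite n] {C : σ → Matrix n n 𝕜}
    (hC : ∀ i, (C i).PosSemidef) : (piKronecker C).PosSemidef := by
  classical
  have := Fintype.ofFinite n
  choose B hB using fun i => exists_eq_conjTranspose_mul_self (hC i)
  rw [funext hB, ← piKronecker_mul_piKronecker, ← conjTranspose_piKronecker]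
  exact posSemidef_conjTranspose_mul_self _

end PiKronecker

section KrausMap

variable {κ l m n R : Type*} [Fintype κ] [Fintype n] [CommSemiring R] [StarRing R]

/-- The completely positive map `X ↦ ∑ i, K i * X * (K i)ᴴ` with Kraus operators `K i`. Its adjoint
for the trace pairing is the Kraus map of the family `fun i => (K i)ᴴ`. -/
def krausMap (K : κ → Matrix m n R) : Matrix n n R →ₗ[R] Matrix m m R where
  toFun X := ∑ i, K i * X * (K i)ᴴ
  map_add' X Y := by simp only [Matrix.mul_add, Matrix.add_mul, Finset.sum_add_distrib]
  map_smul' c X := by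
    simp only [Matrix.mul_smul, Matrix.smul_mul, Finset.smul_sum, RingHom.id_apply]

lemma krausMap_apply (K : κ → Matrix m n R) (X : Matrix n n R) :
    krausMap K X = ∑ i, K i * X * (K i)ᴴ := rfl

lemma krausMap_one [DecidableEq n] (K : κ → Matrix m n R) :
    krausMap K 1 = ∑ i, K i * (K i)ᴴ := by
  simp only [krausMap_apply, Matrix.mul_one]

lemma trace_krausMap_conjTranspose_mul [Fintype m] (K : κ → Matrix m n R) (X : Matrix m m R)
    (Y : Matrix n n R) :
    (krausMap (fun i => (K i)ᴴ) X * Y).trace = (X * krausMap K Y).trace := by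
  simp only [krausMap_apply, conjTranspose_conjTranspose, Finset.sum_mul, Finset.mul_sum,
    trace_sum]
  refine Finset.sum_congr rfl fun i _ => ?_
  rw [Matrix.mul_assoc, Matrix.mul_assoc, trace_mul_comm]
  simp only [Matrix.mul_assoc]

lemma krausMap_one_kronecker [Fintype l] [DecidableEq l] (K : κ → Matrix m n R)
    (P : Matrix l l R) (Q : Matrix n n R) :
    krausMap (fun i => (1 : Matrix l l R) ⊗ₖ K i) (P ⊗ₖ Q) = P ⊗ₖ krausMap K Q := by
  simp only [krausMap_apply, conjTranspose_kronecker, ← mul_kronecker_mul, conjTranspose_one,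
    one_mul, mul_one]
  ext ⟨a, b⟩ ⟨e, f⟩
  simp only [Matrix.sum_apply, kronecker_apply, Finset.mul_sum]

lemma krausMap_piKronecker {σ : Type*} [Fintype σ] [DecidableEq σ] (K : σ → κ → Matrix m n R)
    (X : σ → Matrix n n R) :
    krausMap (fun α : σ → κ => piKronecker fun i => K i (α i)) (piKronecker X) =
      piKronecker fun i => krausMap (K i) (X i) := by
  simp only [krausMap_apply, conjTranspose_piKronecker, piKronecker_mul_piKronecker,
    piKronecker_sum]

lemma posSemidef_krausMap {𝕜 : Type*} [RCLike 𝕜] [Finite m] (K : κ → Matrix m n 𝕜)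
    {X : Matrix n n 𝕜} (hX : X.PosSemidef) : (krausMap K X).PosSemidef :=
  posSemidef_sum _ fun i _ => hX.mul_mul_conjTranspose_same (K i)

end KrausMap

section SwapTrick

variable {κ m n R : Type*} [DecidableEq m]

variable (m R) in
/-- The swap operator `x ⊗ y ↦ y ⊗ x`. -/
def swapMatrix [Zero R] [One R] : Matrix (m × m) (m × m) R :=
  Equiv.Perm.permMatrix R (Equiv.prodComm m m)

lemma isHermitian_swapMatrix [NonAssocSemiring R] [StarRing R] : (swapMatrix m R).IsHermitian :=
  conjTranspose_permMatrix _

variable [Fintype m]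

lemma swapMatrix_mul_self [NonAssocSemiring R] : swapMatrix m R * swapMatrix m R = 1 := by
  rw [swapMatrix, ← PEquiv.toMatrix_trans, ← Equiv.toPEquiv_trans]
  exact permMatrix_refl

lemma trace_swapMatrix_mul_kronecker [NonAssocSemiring R] (P Q : Matrix m m R) :
    (swapMatrix m R * (P ⊗ₖ Q)).trace = (P * Q).trace := by
  rw [swapMatrix, PEquiv.toMatrix_toPEquiv_mul]
  simp only [trace, diag, submatrix_apply, id, Equiv.prodComm_apply, Prod.swap, kronecker_apply,
    Fintype.sum_prod_type, mul_apply]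
  exact Finset.sum_comm

variable [Fintype κ]

/-- The observable `(id ⊗ Γ†)(swap)` of the channel `Γ` with Kraus operators `K i`; its expectation
in `P ⊗ Q` is `tr (P * Γ Q)`. -/
def channelObservable [CommSemiring R] [StarRing R] (K : κ → Matrix m n R) :
    Matrix (m × n) (m × n) R :=
  krausMap (fun i => ((1 : Matrix m m R) ⊗ₖ K i)ᴴ) (swapMatrix m R)

lemma trace_channelObservable_mul_kronecker [Fintype n] [CommSemiring R] [StarRing R]
    (K : κ → Matrix m n R) (P : Matrix m m R) (Q : Matrix n n R) :
    (channelObservable K * (P ⊗ₖ Q)).trace = (P * krausMap K Q).trace := by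
  rw [channelObservable, trace_krausMap_conjTranspose_mul, krausMap_one_kronecker,
    trace_swapMatrix_mul_kronecker]

variable [DecidableEq n]

lemma krausMap_conjTranspose_one_kronecker_one [CommSemiring R] [StarRing R]
    {K : κ → Matrix m n R} (hK : ∑ i, (K i)ᴴ * K i = 1) :
    krausMap (fun i => ((1 : Matrix m m R) ⊗ₖ K i)ᴴ) 1 = 1 := by
  simp only [conjTranspose_kronecker, conjTranspose_one]
  rw [← one_kronecker_one, krausMap_one_kronecker, krausMap_one]
  simp only [conjTranspose_conjTranspose, hK, one_kronecker_one]

variable [Finite n] {𝕜 : Type*} [RCLike 𝕜] {K : κ → Matrix m n 𝕜}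

lemma posSemidef_one_add_channelObservable (hK : ∑ i, (K i)ᴴ * K i = 1) :
    (1 + channelObservable K).PosSemidef := by
  rw [← krausMap_conjTranspose_one_kronecker_one hK, channelObservable, ← map_add]
  exact posSemidef_krausMap _
    (posSemidef_one_add_of_mul_self_eq_one isHermitian_swapMatrix swapMatrix_mul_self)

lemma posSemidef_one_sub_channelObservable (hK : ∑ i, (K i)ᴴ * K i = 1) :
    (1 - channelObservable K).PosSemidef := by
  rw [← krausMap_conjTranspose_one_kronecker_one hK, channelObservable, ← map_sub, sub_eq_add_neg]
  exact posSemidef_krausMap _ (posSemidef_one_add_of_mul_self_eq_one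
    isHermitian_swapMatrix.neg (by rw [neg_mul_neg, swapMatrix_mul_self]))

end SwapTrick

section MomentOperator

variable {d s D : ℕ}

lemma isCompact_unitaryGroup {n 𝕜 : Type*} [Fintype n] [DecidableEq n] [RCLike 𝕜] :
    IsCompact (unitaryGroup n 𝕜 : Set (Matrix n n 𝕜)) := by
  have : ProperSpace (Matrix n n 𝕜) := inferInstanceAs (ProperSpace (n → n → 𝕜))
  have hclosed : IsClosed (unitaryGroup n 𝕜 : Set (Matrix n n 𝕜)) := isClosed_unitary
  refine Metric.isCompact_of_isClosed_isBounded hclosed ?_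
  exact isBounded_iff_forall_norm_le.mpr ⟨1, fun _ => entrywise_sup_norm_bound_of_unitary⟩

lemma integrable_of_continuous_unitaryGroup {n E : Type*} [Fintype n] [DecidableEq n]
    [NormedAddCommGroup E] {lam : Measure (unitaryGroup n ℂ)} [IsFiniteMeasure lam]
    {g : unitaryGroup n ℂ → E} (hg : Continuous g) : Integrable g lam :=
  have : CompactSpace (unitaryGroup n ℂ) := isCompact_iff_compactSpace.mp isCompact_unitaryGroup
  hg.integrable_of_hasCompactSupport (.of_compactSpace g)

lemma continuous_tpow {ι : Type*} : Continuous fun M : Matrix ι ι ℂ => tpow M s := by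
  unfold tpow
  fun_prop

lemma trace_mul_momentOp (lam : Measure (unitaryGroup (Fin d) ℂ)) [IsFiniteMeasure lam]
    (T M : Matrix ((Fin s → Fin d) × Fin D) ((Fin s → Fin d) × Fin D) ℂ) :
    (T * momentOp d s D lam M).trace =
      ∫ U, (T * ((tpow (U : Matrix (Fin d) (Fin d) ℂ) s ⊗ₖ (1 : Matrix (Fin D) (Fin D) ℂ)) * M *
        (tpow (U : Matrix (Fin d) (Fin d) ℂ) s ⊗ₖ (1 : Matrix (Fin D) (Fin D) ℂ))ᴴ)).trace
        ∂lam := by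
  have hW : Continuous fun U : unitaryGroup (Fin d) ℂ =>
      tpow (U : Matrix (Fin d) (Fin d) ℂ) s ⊗ₖ (1 : Matrix (Fin D) (Fin D) ℂ) := by
    have htpow : Continuous fun U : unitaryGroup (Fin d) ℂ =>
        tpow (U : Matrix (Fin d) (Fin d) ℂ) s := continuous_tpow.comp continuous_subtype_val
    exact continuous_matrix fun i j => (htpow.matrix_elem i.1 j.1).mul continuous_const
  let traceMulLeft := LinearMap.toContinuousLinearMap
    ((traceLinearMap _ ℂ ℂ).comp (LinearMap.mulLeft ℂ T))
  exact (traceMulLeft.integral_comp_comm (integrable_of_continuous_unitaryGroup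
    ((hW.matrix_mul continuous_const).matrix_mul hW.matrix_conjTranspose))).symm

lemma trace_momentOp (lam : Measure (unitaryGroup (Fin d) ℂ)) [IsProbabilityMeasure lam]
    (M : Matrix ((Fin s → Fin d) × Fin D) ((Fin s → Fin d) × Fin D) ℂ) :
    (momentOp d s D lam M).trace = M.trace := by
  have hW (U : unitaryGroup (Fin d) ℂ) :
      (tpow (U : Matrix (Fin d) (Fin d) ℂ) s ⊗ₖ (1 : Matrix (Fin D) (Fin D) ℂ))ᴴ *
        (tpow (U : Matrix (Fin d) (Fin d) ℂ) s ⊗ₖ (1 : Matrix (Fin D) (Fin D) ℂ)) = 1 := by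
    have hU : (U : Matrix (Fin d) (Fin d) ℂ)ᴴ * U = 1 := mem_unitaryGroup_iff'.mp U.2
    rw [conjTranspose_kronecker, ← mul_kronecker_mul, tpow_eq_piKronecker,
      conjTranspose_piKronecker, piKronecker_mul_piKronecker, hU, piKronecker_one,
      conjTranspose_one, one_mul, one_kronecker_one]
  have h := trace_mul_momentOp lam 1 M
  simpa only [one_mul, trace_mul_comm _ (_)ᴴ, ← Matrix.mul_assoc, hW, integral_const,
    probReal_univ, one_smul] using h

end MomentOperator

section TensorInput

lemma trace_submatrix_equiv {m n R : Type*} [Fintype m] [Fintype n] [AddCommMonoid R]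
    (e : m ≃ n) (M : Matrix n n R) : (M.submatrix e e).trace = M.trace :=
  e.sum_comp fun i => M i i

variable {k : ℕ} {ι : Type*}

/-- Splits `2 * k` tensor factors into the first `k` and the last `k`, dropping a trivial
ancilla. -/
def splitCopiesEquiv (ι : Type*) (k : ℕ) :
    (Fin (2 * k) → ι) × Fin 1 ≃ (Fin k → ι) × (Fin k → ι) :=
  (Equiv.prodUnique _ _).trans <|
    (((finCongr (two_mul k)).trans finSumFinEquiv.symm).arrowCongr (Equiv.refl ι)).trans <|
      Equiv.sumArrowEquivProdArrow _ _ _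

lemma tpow_two_mul_kronecker_one (M : Matrix ι ι ℂ) :
    tpow M (2 * k) ⊗ₖ (1 : Matrix (Fin 1) (Fin 1) ℂ) =
      (tpow M k ⊗ₖ tpow M k).submatrix (splitCopiesEquiv ι k) (splitCopiesEquiv ι k) := by
  ext ⟨f, x⟩ ⟨g, y⟩
  rw [Subsingleton.elim x y]
  simp only [kronecker_apply, one_apply_eq, mul_one, submatrix_apply, tpow]
  rw [← Equiv.prod_comp ((finCongr (two_mul k)).trans finSumFinEquiv.symm).symm,
    Fintype.prod_sum_type]
  rfl

/-- The matrix `A^{⊗k} ⊗ B^{⊗k}` on `2 * k` copies and a trivial ancilla. -/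
noncomputable def tensorInput (k : ℕ) (A B : Matrix ι ι ℂ) :
    Matrix ((Fin (2 * k) → ι) × Fin 1) ((Fin (2 * k) → ι) × Fin 1) ℂ :=
  (tpow A k ⊗ₖ tpow B k).submatrix (splitCopiesEquiv _ k) (splitCopiesEquiv _ k)

lemma posSemidef_tensorInput [Finite ι] {A B : Matrix ι ι ℂ} (hA : A.PosSemidef)
    (hB : B.PosSemidef) : (tensorInput k A B).PosSemidef :=
  ((posSemidef_piKronecker fun _ => hA).kronecker (posSemidef_piKronecker fun _ => hB)).submatrix _

variable [Fintype ι]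

lemma trace_tensorInput (A B : Matrix ι ι ℂ) :
    (tensorInput k A B).trace = A.trace ^ k * B.trace ^ k := by
  simp only [tensorInput, trace_submatrix_equiv, trace_kronecker, tpow_eq_piKronecker,
    trace_piKronecker, Fin.prod_const]

lemma re_trace_tensorInput {A B : Matrix ι ι ℂ} (hA : A.PosSemidef) (hB : B.PosSemidef) :
    (tensorInput k A B).trace.re = A.trace.re ^ k * B.trace.re ^ k := by
  have ofReal_re_trace {C : Matrix ι ι ℂ} (hC : C.PosSemidef) : (C.trace.re : ℂ) = C.trace :=
    Complex.ext rfl (Complex.nonneg_iff.mp hC.trace_nonneg).2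
  rw [trace_tensorInput, ← ofReal_re_trace hA, ← ofReal_re_trace hB]
  simp only [← Complex.ofReal_pow, ← Complex.ofReal_mul, Complex.ofReal_re]

lemma tpow_conj_tensorInput (U A B : Matrix ι ι ℂ) :
    (tpow U (2 * k) ⊗ₖ (1 : Matrix (Fin 1) (Fin 1) ℂ)) * tensorInput k A B *
        (tpow U (2 * k) ⊗ₖ (1 : Matrix (Fin 1) (Fin 1) ℂ))ᴴ =
      tensorInput k (U * A * Uᴴ) (U * B * Uᴴ) := by
  rw [tensorInput, tpow_two_mul_kronecker_one, conjTranspose_submatrix, submatrix_mul_equiv,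
    submatrix_mul_equiv, conjTranspose_kronecker, ← mul_kronecker_mul, ← mul_kronecker_mul,
    tensorInput]
  simp only [tpow_eq_piKronecker, conjTranspose_piKronecker, piKronecker_mul_piKronecker]

variable {κ : Type*} [Fintype κ] [DecidableEq ι]

/-- The observable of the `k`-th tensor power of a channel, on `2 * k` copies and a trivial
ancilla. -/
noncomputable def tensorObservable (k : ℕ) (K : κ → Matrix ι ι ℂ) :
    Matrix ((Fin (2 * k) → ι) × Fin 1) ((Fin (2 * k) → ι) × Fin 1) ℂ :=
  (channelObservable fun α : Fin k → κ => piKronecker fun i => K (α i)).submatrix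
    (splitCopiesEquiv _ k) (splitCopiesEquiv _ k)

lemma posSemidef_one_add_tensorObservable {K : κ → Matrix ι ι ℂ}
    (hK : ∑ i, (K i)ᴴ * K i = 1) : (1 + tensorObservable k K).PosSemidef := by
  rw [← submatrix_one_equiv (splitCopiesEquiv ι k)]
  exact (posSemidef_one_add_channelObservable
    (sum_conjTranspose_mul_self_piKronecker fun _ => hK)).submatrix _

lemma posSemidef_one_sub_tensorObservable {K : κ → Matrix ι ι ℂ}
    (hK : ∑ i, (K i)ᴴ * K i = 1) : (1 - tensorObservable k K).PosSemidef := by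
  rw [← submatrix_one_equiv (splitCopiesEquiv ι k)]
  exact (posSemidef_one_sub_channelObservable
    (sum_conjTranspose_mul_self_piKronecker fun _ => hK)).submatrix _

lemma trace_tensorObservable_mul_tensorInput (K : κ → Matrix ι ι ℂ)
    (A B : Matrix ι ι ℂ) :
    (tensorObservable k K * tensorInput k A B).trace = (A * krausMap K B).trace ^ k := by
  rw [tensorObservable, tensorInput, submatrix_mul_equiv, trace_submatrix_equiv,
    trace_channelObservable_mul_kronecker, tpow_eq_piKronecker, tpow_eq_piKronecker,
    krausMap_piKronecker, piKronecker_mul_piKronecker, trace_piKronecker, Fin.prod_const]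

lemma trace_tensorObservable_mul_momentOp {d : ℕ} (lam : Measure (unitaryGroup (Fin d) ℂ))
    [IsFiniteMeasure lam] (K : κ → Matrix (Fin d) (Fin d) ℂ) (A B : Matrix (Fin d) (Fin d) ℂ) :
    (tensorObservable k K * momentOp d (2 * k) 1 lam (tensorInput k A B)).trace =
      ∫ U, (A * ((U : Matrix (Fin d) (Fin d) ℂ)ᴴ *
        krausMap K ((U : Matrix (Fin d) (Fin d) ℂ) * B * (U : Matrix (Fin d) (Fin d) ℂ)ᴴ) *
        (U : Matrix (Fin d) (Fin d) ℂ))).trace ^ k ∂lam := by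
  rw [trace_mul_momentOp]
  refine integral_congr_ae (.of_forall fun U => ?_)
  simp only [tpow_conj_tensorInput, trace_tensorObservable_mul_tensorInput]
  rw [Matrix.mul_assoc, Matrix.mul_assoc, trace_mul_comm]
  simp only [Matrix.mul_assoc]

end TensorInput

theorem twirling_error_general {d k : ℕ} {ε : ℝ} {κ : Type*} [Fintype κ]
    {ν μ : Measure (unitaryGroup (Fin d) ℂ)} [IsFiniteMeasure ν] [IsProbabilityMeasure μ]
    (hdesign : ∀ M : Matrix ((Fin (2 * k) → Fin d) × Fin 1) ((Fin (2 * k) → Fin d) × Fin 1) ℂ,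
      M.PosSemidef →
      (momentOp d (2 * k) 1 ν M - ((1 - ε : ℝ) : ℂ) • momentOp d (2 * k) 1 μ M).PosSemidef ∧
      (((1 + ε : ℝ) : ℂ) • momentOp d (2 * k) 1 μ M - momentOp d (2 * k) 1 ν M).PosSemidef)
    {A B : Matrix (Fin d) (Fin d) ℂ} (hA : A.PosSemidef) (hB : B.PosSemidef)
    {K : κ → Matrix (Fin d) (Fin d) ℂ} (hK : ∑ i, (K i)ᴴ * K i = 1) :
    ‖(∫ U, (A * ((U : Matrix (Fin d) (Fin d) ℂ)ᴴ *
          krausMap K ((U : Matrix (Fin d) (Fin d) ℂ) * B * (U : Matrix (Fin d) (Fin d) ℂ)ᴴ) *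
          (U : Matrix (Fin d) (Fin d) ℂ))).trace ^ k ∂ν) -
      ∫ U, (A * ((U : Matrix (Fin d) (Fin d) ℂ)ᴴ *
          krausMap K ((U : Matrix (Fin d) (Fin d) ℂ) * B * (U : Matrix (Fin d) (Fin d) ℂ)ᴴ) *
          (U : Matrix (Fin d) (Fin d) ℂ))).trace ^ k ∂μ‖
      ≤ ε * A.trace.re ^ k * B.trace.re ^ k := by
  obtain ⟨hlower, hupper⟩ := hdesign _ (posSemidef_tensorInput (k := k) hA hB)
  set N := momentOp d (2 * k) 1 ν (tensorInput k A B) with hN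
  set P := momentOp d (2 * k) 1 μ (tensorInput k A B) with hP
  have hlower' : ((ε : ℂ) • P + (N - P)).PosSemidef := by
    convert hlower using 1
    push_cast
    module
  have hupper' : ((ε : ℂ) • P - (N - P)).PosSemidef := by
    convert hupper using 1
    push_cast
    module
  have htrace : ((ε : ℂ) • P).trace.re = ε * A.trace.re ^ k * B.trace.re ^ k := by
    rw [trace_smul, hP, trace_momentOp, smul_eq_mul, Complex.re_ofReal_mul,
      re_trace_tensorInput hA hB, mul_assoc]
  rw [← trace_tensorObservable_mul_momentOp, ← trace_tensorObservable_mul_momentOp, ← hN, ← hP,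
    ← trace_sub, ← mul_sub, ← htrace]
  exact norm_trace_mul_le (posSemidef_one_add_tensorObservable hK)
    (posSemidef_one_sub_tensorObservable hK) hlower' hupper'

/-- **Twirling-error lemma for relative-error approximate `2k`-designs.**
If `ν` is an `ε`-approximate unitary `2k`-design in relative error, then for all
positive semidefinite `A, B` and every Kraus channel `Γ`,
`|∫ (tr(A·UᴴΓ(UBUᴴ)U))^k dν − ∫ (tr(A·UᴴΓ(UBUᴴ)U))^k dμ| ≤ 2ε·(tr A)^k·(tr B)^k`. -/
theorem twirling_error (d k : ℕ) (hd : 1 ≤ d) (hk : 1 ≤ k) (ε : ℝ) (hε : 0 ≤ ε)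
    (ν : Measure (Matrix.unitaryGroup (Fin d) ℂ)) [IsProbabilityMeasure ν]
    (μ : Measure (Matrix.unitaryGroup (Fin d) ℂ))
    [μ.IsHaarMeasure] [IsProbabilityMeasure μ]
    (hdesign : ∀ D : ℕ, 0 < D →
      ∀ M : Matrix ((Fin (2 * k) → Fin d) × Fin D) ((Fin (2 * k) → Fin d) × Fin D) ℂ,
        M.PosSemidef →
        (momentOp d (2 * k) D ν M - ((1 - ε : ℝ) : ℂ) • momentOp d (2 * k) D μ M).PosSemidef ∧
        (((1 + ε : ℝ) : ℂ) • momentOp d (2 * k) D μ M - momentOp d (2 * k) D ν M).PosSemidef)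
    (A B : Matrix (Fin d) (Fin d) ℂ) (hA : A.PosSemidef) (hB : B.PosSemidef)
    (r : ℕ) (K : Fin r → Matrix (Fin d) (Fin d) ℂ)
    (hK : ∑ i, (K i)ᴴ * K i = 1) :
    ‖(∫ U, ((A * ((U : Matrix (Fin d) (Fin d) ℂ)ᴴ *
          (∑ i, K i * ((U : Matrix (Fin d) (Fin d) ℂ) * B *
            (U : Matrix (Fin d) (Fin d) ℂ)ᴴ) * (K i)ᴴ) *
          (U : Matrix (Fin d) (Fin d) ℂ))).trace) ^ k ∂ν) -
      (∫ U, ((A * ((U : Matrix (Fin d) (Fin d) ℂ)ᴴ *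
          (∑ i, K i * ((U : Matrix (Fin d) (Fin d) ℂ) * B *
            (U : Matrix (Fin d) (Fin d) ℂ)ᴴ) * (K i)ᴴ) *
          (U : Matrix (Fin d) (Fin d) ℂ))).trace) ^ k ∂μ)‖
      ≤ 2 * ε * A.trace.re ^ k * B.trace.re ^ k := by
  have h := twirling_error_general (hdesign 1 one_pos) hA hB hK
  exact h.trans (by linarith [(norm_nonneg _).trans h])
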